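/- Let G be a finite simple graph on the vertex set {v_1, …, v_n} (with this linear ordering) such that every vertex v_i has at most k neighbours among {v_1, …, v_{i−1}}, where k > d ≥ 0 are integers. Colour the vertices in order: colour v_i blue if v_i has at most d neighbours among the earlier vertices already coloured blue, and red otherwise. Let B be the set of blue vertices and R the set of red vertices. Then the subgraph of G induced on B is d-degenerate and the subgraph of G induced on R is (k−d−1)-degenerate. -/

import Mathlib

/-- The subgraph of `G` induced on `A` is `d`-degenerate: every nonempty (finite)
subset of `A` contains a vertex with at most `d` neighbours inside that subset. -/
def DegenOn {V : Type*} (G : SimpleGraph V) (d : ℕ) (A : Set V) : Prop :=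
  ∀ S : Set V, S ⊆ A → S.Finite → S.Nonempty → ∃ v ∈ S, (S ∩ G.neighborSet v).ncard ≤ d

/-- `G` is `d`-degenerate. -/
def Degen {V : Type*} (G : SimpleGraph V) (d : ℕ) : Prop :=
  DegenOn G d Set.univ

/-- `α_d(G)`: the maximum number of vertices of an induced `d`-degenerate subgraph of `G`. -/
noncomputable def alphaDeg {V : Type*} [Fintype V] (G : SimpleGraph V) (d : ℕ) : ℕ :=
  sSup {m : ℕ | ∃ A : Set V, DegenOn G d A ∧ A.ncard = m}

/-
In a finite set `S` of vertices, every neighbour of the last vertex `v` of `S` that lies in `S`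
precedes `v`, so degeneracy on a set follows from bounding earlier neighbours within the set. A blue
vertex has few earlier blue neighbours because that is why it was coloured blue; a red vertex has
many earlier blue neighbours, and the bound on all its earlier neighbours leaves room for only a
few red ones.
-/

lemma encard_compl_inter_le_of_lt_encard_inter {α : Type*} {s t : Set α} {d e : ℕ∞}
    (ht : t.encard ≤ d + e + 1) (hst : d < (s ∩ t).encard) : (sᶜ ∩ t).encard ≤ e := by
  have hsplit : (s ∩ t).encard + (sᶜ ∩ t).encard = t.encard := by
    rw [Set.inter_comm s, Set.inter_comm sᶜ, ← Set.sdiff_eq, add_comm,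
      Set.encard_sdiff_add_encard_inter]
  have hsum : (d + 1) + (sᶜ ∩ t).encard ≤ (d + 1) + e :=
    calc
      (d + 1) + (sᶜ ∩ t).encard ≤ (s ∩ t).encard + (sᶜ ∩ t).encard := by
        gcongr
        exact Order.add_one_le_of_lt hst
      _ = t.encard := hsplit
      _ ≤ d + e + 1 := ht
      _ = (d + 1) + e := add_right_comm _ _ _
  have hd : d + 1 ≠ ⊤ := by simpa using hst.ne_top
  exact (ENat.add_le_add_iff_left hd).1 hsum

section EarlierNeighbors

variable {V : Type*} [LinearOrder V] {G : SimpleGraph V}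

/-- The neighbours of `v` that precede it in the vertex ordering; used to bound degeneracy and to
describe the greedy colouring. Restrictions to a colour class `A` are written
`A ∩ earlierNeighborSet G v`. -/
def earlierNeighborSet (G : SimpleGraph V) (v : V) : Set V :=
  {u | u < v ∧ G.Adj u v}

lemma exists_inter_neighborSet_subset_earlierNeighborSet (G : SimpleGraph V) {S : Set V}
    (hfin : S.Finite) (hne : S.Nonempty) :
    ∃ v ∈ S, S ∩ G.neighborSet v ⊆ earlierNeighborSet G v := by
  obtain ⟨v, hvS, hmax⟩ := S.exists_max_image id hfin hne
  exact ⟨v, hvS, fun u ⟨huS, hvu⟩ ↦ ⟨(hmax u huS).lt_of_ne hvu.ne', hvu.symm⟩⟩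

lemma degenOn_of_encard_inter_earlierNeighborSet_le {A : Set V} {d : ℕ}
    (h : ∀ v ∈ A, (A ∩ earlierNeighborSet G v).encard ≤ d) : DegenOn G d A := by
  intro S hSA hfin hne
  obtain ⟨v, hvS, hearlier⟩ := exists_inter_neighborSet_subset_earlierNeighborSet G hfin hne
  have hsub : S ∩ G.neighborSet v ⊆ A ∩ earlierNeighborSet G v :=
    fun u hu ↦ ⟨hSA hu.1, hearlier hu⟩
  exact ⟨v, hvS, ENat.toNat_le_of_le_natCast ((Set.encard_le_encard hsub).trans (h v (hSA hvS)))⟩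

-- Cardinalities are `encard`s because `ncard` is `0` on an infinite set of earlier neighbours.
theorem stmt_4_general {d e : ℕ} {B : Set V}
    (hG : ∀ v, (earlierNeighborSet G v).encard ≤ d + e + 1)
    (hB : ∀ v, v ∈ B ↔ (B ∩ earlierNeighborSet G v).encard ≤ d) :
    DegenOn G d B ∧ DegenOn G e Bᶜ := by
  constructor
  · exact degenOn_of_encard_inter_earlierNeighborSet_le fun v hv ↦ (hB v).1 hv
  · refine degenOn_of_encard_inter_earlierNeighborSet_le fun v hv ↦ ?_
    have hblue : d < (B ∩ earlierNeighborSet G v).encard := not_le.1 (mt (hB v).2 hv)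
    exact encard_compl_inter_le_of_lt_encard_inter (hG v) hblue

end EarlierNeighbors

theorem stmt_4 (n k d : ℕ) (hdk : d < k) (G : SimpleGraph (Fin n))
    (hk : ∀ i : Fin n, {j : Fin n | j < i ∧ G.Adj j i}.ncard ≤ k)
    (B : Set (Fin n))
    (hB : ∀ i : Fin n, i ∈ B ↔ {j : Fin n | j ∈ B ∧ j < i ∧ G.Adj j i}.ncard ≤ d) :
    DegenOn G d B ∧ DegenOn G (k - d - 1) Bᶜ := by
  have encard_le_iff (s : Set (Fin n)) (m : ℕ) : s.encard ≤ m ↔ s.ncard ≤ m := by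
    rw [← s.toFinite.cast_ncard_eq, Nat.cast_le]
  have hsum : d + (k - d - 1) + 1 = k := by lia
  refine stmt_4_general (fun v ↦ ?_) fun v ↦ (hB v).trans (encard_le_iff _ d).symm
  exact_mod_cast (encard_le_iff _ _).2 ((hk v).trans_eq hsum.symm)
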